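/- Let F₂ be the free group on two generators a, b, and let σ be the automorphism of F₂ with σ(a) = a⁻¹ and σ(b) = b⁻¹. Then the subgroup of Aut(F₂) generated by the inner automorphisms Inn(F₂) together with σ is a normal subgroup of Aut(F₂). -/

import Mathlib

/-! Nielsen's theorem says that `Aut(F₂)` is generated by `a ↔ b`, `a ↦ a⁻¹` and `a ↦ ab`. The first
two commute with `σ`, and the third does so up to conjugation by `b`, so `σ` is central modulo the
normal subgroup `Inn(F₂)`; hence `Inn(F₂)` and `σ` generate a normal subgroup.

For Nielsen's theorem, take a basis of least total length among those obtained from a given one by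
Nielsen moves. It is Nielsen reduced: the only obstruction that no single move shortens is a basis
element `x = φ a` half of which cancels against `y = φ b` at each end, and then replacing `y` by
`y x⁻¹` and conjugating by the common half of `x` and `y` shortens the basis. Every reduced product
of at least two elements of a Nielsen reduced set has length at least two, so `a` and `b` themselves
belong to the shortest basis up to inversion. -/

open FreeGroup hiding map_one map_mul map_inv

section GromovProduct

/-- The length of the longest common prefix of two lists. -/
def commonPrefixLength {β : Type*} [DecidableEq β] : List β → List β → ℕ
  | x :: xs, y :: ys => if x = y then commonPrefixLength xs ys + 1 else 0
  | _, _ => 0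

theorem commonPrefixLength_comm {β : Type*} [DecidableEq β] (x y : List β) :
    commonPrefixLength x y = commonPrefixLength y x := by
  fun_induction commonPrefixLength x y with
  | case1 xs b ys ih => simp only [commonPrefixLength, if_true, ih]
  | case2 a xs b ys hab => simp only [commonPrefixLength, if_neg (Ne.symm hab)]
  | case3 x y h => cases x <;> cases y <;> grind [commonPrefixLength]

theorem min_commonPrefixLength_le {β : Type*} [DecidableEq β] :
    ∀ x y z : List β,
      min (commonPrefixLength x y) (commonPrefixLength y z) ≤ commonPrefixLength x z
  | [], _, _ | _ :: _, [], _ | _ :: _, _ :: _, [] => by simp [commonPrefixLength]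
  | _ :: xs, _ :: ys, _ :: zs => by
    grind [commonPrefixLength, min_commonPrefixLength_le xs ys zs]

theorem exists_append_commonPrefixLength {β : Type*} [DecidableEq β] (x y : List β) :
    ∃ p x' y', x = p ++ x' ∧ y = p ++ y' ∧ p.length = commonPrefixLength x y ∧
      ∀ a ∈ x'.head?, ∀ b ∈ y'.head?, a ≠ b := by
  fun_induction commonPrefixLength x y with
  | case1 xs b ys ih =>
    obtain ⟨p, x', y', rfl, rfl, hp, hne⟩ := ih
    exact ⟨b :: p, x', y', rfl, rfl, congrArg (· + 1) hp, hne⟩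
  | case2 a xs b ys hab => exact ⟨[], a :: xs, b :: ys, rfl, rfl, rfl, by simpa using hab⟩
  | case3 x y h =>
    refine ⟨[], x, y, rfl, rfl, rfl, fun a ha b hb => ?_⟩
    cases x <;> cases y <;> grind

variable {α : Type*}

theorem isReduced_invRev_append {L₁ L₂ : List (α × Bool)}
    (h₁ : IsReduced L₁) (h₂ : IsReduced L₂)
    (hne : ∀ a ∈ L₁.head?, ∀ b ∈ L₂.head?, a ≠ b) : IsReduced (invRev L₁ ++ L₂) := by
  classical
  have h₁' : IsReduced (invRev L₁) := by
    rw [isReduced_iff_reduce_eq, reduce_invRev, h₁.reduce_eq]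
  refine List.isChain_append.2 ⟨h₁', h₂, ?_⟩
  cases L₁ with
  | nil => simp
  | cons c L₁ =>
    intro a ha b hb hab
    obtain rfl : (c.1, !c.2) = a := by simpa [invRev] using ha
    have hcb : c.2 ≠ b.2 := fun h => hne c rfl b hb (Prod.ext hab h)
    exact Bool.not_eq.2 hcb

variable [DecidableEq α]

/-- The Gromov product of `x` and `y` based at `1` in the Cayley tree of a free group: the length of
the common initial segment of the two reduced words. -/
def gromovProduct (x y : FreeGroup α) : ℕ := commonPrefixLength x.toWord y.toWord

theorem gromovProduct_comm (x y : FreeGroup α) : gromovProduct x y = gromovProduct y x :=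
  commonPrefixLength_comm _ _

theorem min_gromovProduct_le (x y z : FreeGroup α) :
    min (gromovProduct x y) (gromovProduct y z) ≤ gromovProduct x z :=
  min_commonPrefixLength_le _ _ _

theorem gromovProduct_eq_of_lt {x y z : FreeGroup α}
    (h : gromovProduct y z < gromovProduct x y) : gromovProduct x z = gromovProduct y z := by
  have hyz := min_gromovProduct_le x y z
  have hxz := min_gromovProduct_le y x z
  rw [gromovProduct_comm y x] at hxz
  lia

theorem norm_mk_of_isReduced {L : List (α × Bool)} (h : IsReduced L) :
    (mk L).norm = L.length := by
  rw [FreeGroup.norm, toWord_mk, h.reduce_eq]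

theorem exists_eq_mul_gromovProduct (x y : FreeGroup α) :
    ∃ p x' y', x = p * x' ∧ y = p * y' ∧ p.norm = gromovProduct x y ∧
      x.norm = p.norm + x'.norm ∧ y.norm = p.norm + y'.norm ∧
      (x'⁻¹ * y').norm = x'.norm + y'.norm := by
  obtain ⟨p, x', y', hx, hy, hp, hne⟩ := exists_append_commonPrefixLength x.toWord y.toWord
  have hpx : IsReduced (p ++ x') := hx ▸ isReduced_toWord
  have hpy : IsReduced (p ++ y') := hy ▸ isReduced_toWord
  have hx' : IsReduced x' := hpx.infix (List.suffix_append p x').isInfix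
  have hy' : IsReduced y' := hpy.infix (List.suffix_append p y').isInfix
  have hp' : IsReduced p := hpx.infix (List.prefix_append p x').isInfix
  refine ⟨mk p, mk x', mk y', ?_, ?_, ?_, ?_, ?_, ?_⟩
  · rw [mul_mk, ← hx, mk_toWord]
  · rw [mul_mk, ← hy, mk_toWord]
  · rw [norm_mk_of_isReduced hp', hp, gromovProduct]
  · rw [norm_mk_of_isReduced hp', norm_mk_of_isReduced hx', FreeGroup.norm, hx, List.length_append]
  · rw [norm_mk_of_isReduced hp', norm_mk_of_isReduced hy', FreeGroup.norm, hy, List.length_append]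
  · rw [inv_mk, mul_mk, norm_mk_of_isReduced (isReduced_invRev_append hx' hy' hne),
      norm_mk_of_isReduced hx', norm_mk_of_isReduced hy', List.length_append, invRev_length]

theorem norm_inv_mul_add_gromovProduct (x y : FreeGroup α) :
    (x⁻¹ * y).norm + 2 * gromovProduct x y = x.norm + y.norm := by
  obtain ⟨p, x', y', rfl, rfl, hp, hx, hy, hxy⟩ := exists_eq_mul_gromovProduct x y
  have hcancel : (p * x')⁻¹ * (p * y') = x'⁻¹ * y' := by group
  rw [hcancel]
  lia

theorem norm_mul_of_gromovProduct_lt {w x y : FreeGroup α}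
    (h : gromovProduct x⁻¹ y < gromovProduct w⁻¹ x⁻¹) :
    (w * y).norm + 2 * gromovProduct x⁻¹ y = w.norm + y.norm := by
  rw [← gromovProduct_eq_of_lt h, ← norm_inv_eq (x := w), ← norm_inv_mul_add_gromovProduct,
    inv_inv]

open reduceCyclically in
theorem norm_lt_norm_sq {x : FreeGroup α} (hx : x ≠ 1) : x.norm < (x ^ 2).norm := by
  have hdecomp := conj_conjugator_reduceCyclically x.toWord
  have hcore : reduceCyclically x.toWord ≠ [] := by
    intro hnil
    rw [hnil, List.append_nil] at hdecomp
    rw [← mk_toWord (x := x), ← hdecomp, ← mul_mk, ← inv_mk, mul_inv_cancel] at hx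
    exact hx rfl
  have hsq : (x ^ 2).toWord = conjugator x.toWord ++
      (List.replicate 2 (reduceCyclically x.toWord)).flatten ++ invRev (conjugator x.toWord) := by
    rw [toWord_pow, reduce_flatten_replicate_succ isReduced_toWord]
  have hpos := List.length_pos_iff.2 hcore
  have hlen := congrArg List.length hdecomp
  have hlen_sq := congrArg List.length hsq
  simp only [List.length_append, List.length_flatten, List.map_replicate,
    List.sum_replicate, smul_eq_mul, invRev_length] at hlen hlen_sq
  unfold FreeGroup.norm
  lia

theorem two_mul_gromovProduct_inv_lt {x : FreeGroup α} (hx : x ≠ 1) :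
    2 * gromovProduct x x⁻¹ < x.norm := by
  have hsq : (x⁻¹ * x⁻¹).norm = (x ^ 2).norm := by rw [← mul_inv_rev, norm_inv_eq, sq]
  have := norm_inv_mul_add_gromovProduct x x⁻¹
  have := norm_lt_norm_sq hx
  rw [norm_inv_eq] at *
  lia

theorem toWord_mul_of_norm_mul {x y : FreeGroup α} (h : (x * y).norm = x.norm + y.norm) :
    (x * y).toWord = x.toWord ++ y.toWord :=
  (toWord_mul_sublist x y).eq_of_length (by rw [List.length_append]; exact h)

theorem exists_eq_mul_of_norm_le {a b c d : FreeGroup α} (h : a * b = c * d)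
    (hab : (a * b).norm = a.norm + b.norm) (hcd : (c * d).norm = c.norm + d.norm)
    (hac : a.norm ≤ c.norm) : ∃ r, c = a * r ∧ c.norm = a.norm + r.norm := by
  have hprefix : a.toWord <+: c.toWord := by
    refine List.prefix_of_prefix_length_le (l₃ := (a * b).toWord) ?_ ?_ hac
    · exact toWord_mul_of_norm_mul hab ▸ List.prefix_append _ _
    · exact h ▸ toWord_mul_of_norm_mul hcd ▸ List.prefix_append _ _
  obtain ⟨r, hr⟩ := hprefix
  have hred : IsReduced r :=
    (isReduced_toWord (x := c)).infix (hr ▸ (List.suffix_append _ r).isInfix)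
  refine ⟨mk r, ?_, ?_⟩
  · rw [← mk_toWord (x := a), mul_mk, hr, mk_toWord]
  · rw [norm_mk_of_isReduced hred, FreeGroup.norm, FreeGroup.norm, ← hr, List.length_append]

-- Without cancellation `x = p * s` and `y = p * r * s`, so conjugation by `p` turns `x` and
-- `y * x⁻¹` into `s * p` and `r`.
theorem exists_conj_norm_lt {x y : FreeGroup α} (hx : 2 * gromovProduct x y = x.norm)
    (hinv : 2 * gromovProduct x⁻¹ y⁻¹ = x.norm) (hxy : x.norm ≤ y.norm) :
    ∃ p, (p⁻¹ * x * p).norm ≤ x.norm ∧ (p⁻¹ * (y * x⁻¹) * p).norm + x.norm = y.norm := by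
  obtain ⟨p, s, m, hps, hpm, hp, hs, hm, -⟩ := exists_eq_mul_gromovProduct x y
  obtain ⟨q, s', m', hqs, hqm, hq, hs', hm', -⟩ := exists_eq_mul_gromovProduct x⁻¹ y⁻¹
  rw [norm_inv_eq] at hs' hm'
  have hx' : x = s'⁻¹ * q⁻¹ := by rw [← mul_inv_rev, ← hqs, inv_inv]
  have hy' : y = m'⁻¹ * q⁻¹ := by rw [← mul_inv_rev, ← hqm, inv_inv]
  obtain ⟨e, he, hnorm_e⟩ : ∃ e, s'⁻¹ = p * e ∧ s'⁻¹.norm = p.norm + e.norm :=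
    exists_eq_mul_of_norm_le (hps.symm.trans hx') (by rwa [← hps])
      (by rw [← hx', norm_inv_eq, norm_inv_eq]; lia) (by rw [norm_inv_eq]; lia)
  obtain ⟨r, hr, hnorm_r⟩ : ∃ r, m'⁻¹ = p * r ∧ m'⁻¹.norm = p.norm + r.norm :=
    exists_eq_mul_of_norm_le (hpm.symm.trans hy') (by rwa [← hpm])
      (by rw [← hy', norm_inv_eq, norm_inv_eq]; lia) (by rw [norm_inv_eq]; lia)
  rw [norm_inv_eq] at hnorm_e hnorm_r
  obtain rfl : e = 1 := norm_eq_zero.1 (by lia)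
  have hr' : p⁻¹ * (y * x⁻¹) * p = r := by rw [hy', hx', hr, he]; group
  have hconj : p⁻¹ * x * p = s * p := by rw [hps]; group
  refine ⟨p, ?_, ?_⟩
  · rw [hconj]
    exact (norm_mul_le s p).trans (by lia)
  · rw [hr']
    lia

/-- A Nielsen reduced set, closed under inversion. Nielsen's inequalities `|x⁻¹ * y| ≥ |y|` and
`|x⁻¹ * y * z| > |x| - |y| + |z|` are stated through Gromov products: a factor loses at most half of
its letters on either side of a reduced product, and never all of them. -/
structure NielsenReduced (S : Set (FreeGroup α)) : Prop where
  inv_mem : ∀ x ∈ S, x⁻¹ ∈ S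
  one_notMem : 1 ∉ S
  two_mul_gromovProduct_le : ∀ x ∈ S, ∀ y ∈ S, x ≠ y → 2 * gromovProduct x y ≤ x.norm
  gromovProduct_add_lt : ∀ x ∈ S, ∀ y ∈ S, ∀ z ∈ S, x ≠ y → z ≠ y⁻¹ →
    gromovProduct x y + gromovProduct y⁻¹ z < y.norm

end GromovProduct

/-- `ReducedProduct S w x` says that `w` is a product of elements of `S` with last factor `x` in
which no factor is followed by its inverse. -/
inductive ReducedProduct {G : Type*} [Group G] (S : Set G) : G → G → Prop
  | base (x : G) : x ∈ S → ReducedProduct S x x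
  | step (w x y : G) : ReducedProduct S w x → y ∈ S → y ≠ x⁻¹ → ReducedProduct S (w * y) y

namespace ReducedProduct

theorem last_mem {G : Type*} [Group G] {S : Set G} {w x : G} (h : ReducedProduct S w x) :
    x ∈ S := by
  cases h <;> assumption

theorem mul_right {G : Type*} [Group G] {S : Set G} {w x : G}
    (h : w = 1 ∨ ∃ y, ReducedProduct S w y) (hx : x ∈ S) :
    w * x = 1 ∨ ∃ y, ReducedProduct S (w * x) y := by
  obtain rfl | ⟨y, hy⟩ := h
  · exact Or.inr ⟨x, by simpa only [one_mul] using base x hx⟩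
  by_cases hxy : x = y⁻¹
  · subst hxy
    cases hy with
    | base => exact Or.inl (mul_inv_cancel _)
    | step w z _ hw => exact Or.inr ⟨z, by simpa only [mul_inv_cancel_right] using hw⟩
  · exact Or.inr ⟨x, step w y x hy hx hxy⟩

theorem of_mem_closure {G : Type*} [Group G] {S : Set G} (hS : ∀ x ∈ S, x⁻¹ ∈ S) {w : G}
    (hw : w ∈ Subgroup.closure S) : w = 1 ∨ ∃ x, ReducedProduct S w x := by
  induction hw using Subgroup.closure_induction_right with
  | one => exact Or.inl rfl
  | mul_right w _ x hx ih => exact mul_right ih hx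
  | mul_inv_cancel w _ x hx ih => exact mul_right ih (hS x hx)

end ReducedProduct

namespace NielsenReduced

variable {α : Type*} [DecidableEq α] {S : Set (FreeGroup α)}

theorem norm_pos (h : NielsenReduced S) {x : FreeGroup α} (hx : x ∈ S) : 0 < x.norm :=
  Nat.pos_of_ne_zero fun h0 => h.one_notMem (norm_eq_zero.1 h0 ▸ hx)

theorem gromovProduct_lt_and_norm_le (h : NielsenReduced S) {w x : FreeGroup α}
    (hw : ReducedProduct S w x) :
    (∀ y ∈ S, y ≠ x⁻¹ → gromovProduct x⁻¹ y < gromovProduct w⁻¹ x⁻¹) ∧ x.norm ≤ w.norm := by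
  induction hw with
  | base x hx =>
    refine ⟨fun y hy hyx => ?_, le_rfl⟩
    have hhalf := h.two_mul_gromovProduct_le _ (h.inv_mem x hx) y hy hyx.symm
    have hself := norm_inv_mul_add_gromovProduct x⁻¹ x⁻¹
    have hpos := h.norm_pos hx
    rw [norm_inv_eq] at hhalf
    rw [inv_inv, mul_inv_cancel, FreeGroup.norm_one, norm_inv_eq] at hself
    lia
  | step w x y hw hy hyx ih =>
    obtain ⟨hlt, hle⟩ := ih
    have hx' := h.inv_mem x hw.last_mem
    have hnorm := norm_mul_of_gromovProduct_lt (hlt y hy hyx)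
    have hlast := norm_inv_mul_add_gromovProduct (w * y)⁻¹ y⁻¹
    rw [inv_inv, mul_inv_cancel_right, norm_inv_eq, norm_inv_eq] at hlast
    have hhalf := h.two_mul_gromovProduct_le _ hx' y hy hyx.symm
    rw [norm_inv_eq] at hhalf
    refine ⟨fun z hz hzy => ?_, by lia⟩
    have hadd := h.gromovProduct_add_lt _ hx' y hy z hz hyx.symm hzy
    lia

theorem mem_of_norm_eq_one (h : NielsenReduced S) {w : FreeGroup α}
    (hmem : w ∈ Subgroup.closure S) (hw1 : w.norm = 1) : w ∈ S := by
  obtain rfl | ⟨y, hy⟩ := ReducedProduct.of_mem_closure h.inv_mem hmem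
  · simp only [FreeGroup.norm_one, zero_ne_one] at hw1
  cases hy with
  | base _ hy => exact hy
  | step w x _ hw hy hyx =>
    obtain ⟨hlt, hle⟩ := h.gromovProduct_lt_and_norm_le hw
    have hnorm := norm_mul_of_gromovProduct_lt (hlt y hy hyx)
    have hx := h.two_mul_gromovProduct_le _ (h.inv_mem x hw.last_mem) y hy hyx.symm
    have hy' := h.two_mul_gromovProduct_le y hy _ (h.inv_mem x hw.last_mem) hyx
    have hpos_x := h.norm_pos hw.last_mem
    have hpos_y := h.norm_pos hy
    rw [gromovProduct_comm] at hy'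
    rw [norm_inv_eq] at hx
    lia

end NielsenReduced

section NielsenAutomorphisms

local notation "F₂" => FreeGroup (Fin 2)

theorem mulAut_freeGroup_ext {φ ψ : MulAut F₂} (h0 : φ (of 0) = ψ (of 0))
    (h1 : φ (of 1) = ψ (of 1)) : φ = ψ := by
  refine MulEquiv.toMonoidHom_injective (FreeGroup.ext_hom _ _ fun i => ?_)
  fin_cases i
  · exact h0
  · exact h1

/-- The Nielsen automorphism `a ↦ b`, `b ↦ a` of the free group on `a = of 0`, `b = of 1`. -/
def swapAut : MulAut F₂ := freeGroupCongr (Equiv.swap 0 1)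

/-- The Nielsen automorphism `a ↦ a⁻¹`, `b ↦ b`. -/
def invertAut : MulAut F₂ :=
  MonoidHom.toMulEquiv (lift ![(of 0)⁻¹, of 1]) (lift ![(of 0)⁻¹, of 1])
    (FreeGroup.ext_hom _ _ fun i => by fin_cases i <;> simp)
    (FreeGroup.ext_hom _ _ fun i => by fin_cases i <;> simp)

/-- The Nielsen automorphism `a ↦ a * b`, `b ↦ b`. -/
def transvectionAut : MulAut F₂ :=
  MonoidHom.toMulEquiv (lift ![of 0 * of 1, of 1]) (lift ![of 0 * (of 1)⁻¹, of 1])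
    (FreeGroup.ext_hom _ _ fun i => by fin_cases i <;> simp)
    (FreeGroup.ext_hom _ _ fun i => by fin_cases i <;> simp)

@[simp]
theorem swapAut_of_zero : swapAut (of 0) = of 1 := by
  simp [swapAut, freeGroupCongr_apply]

@[simp]
theorem swapAut_of_one : swapAut (of 1) = of 0 := by
  simp [swapAut, freeGroupCongr_apply]

@[simp]
theorem invertAut_of_zero : invertAut (of 0) = (of 0)⁻¹ := by
  simp [invertAut]

@[simp]
theorem invertAut_of_one : invertAut (of 1) = of 1 := by
  simp [invertAut]

@[simp]
theorem transvectionAut_of_zero : transvectionAut (of 0) = of 0 * of 1 := by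
  simp [transvectionAut]

@[simp]
theorem transvectionAut_of_one : transvectionAut (of 1) = of 1 := by
  simp [transvectionAut]

@[simp]
theorem transvectionAut_symm_of_zero : transvectionAut.symm (of 0) = of 0 * (of 1)⁻¹ := by
  simp [MulEquiv.symm_apply_eq]

@[simp]
theorem transvectionAut_symm_of_one : transvectionAut.symm (of 1) = of 1 := by
  simp [MulEquiv.symm_apply_eq]

/-- The group of automorphisms of `F₂` generated by the elementary Nielsen automorphisms. -/
def nielsenSubgroup : Subgroup (MulAut F₂) :=
  Subgroup.closure {swapAut, invertAut, transvectionAut}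

theorem swapAut_mem_nielsenSubgroup : swapAut ∈ nielsenSubgroup :=
  Subgroup.subset_closure (by simp)

theorem invertAut_mem_nielsenSubgroup : invertAut ∈ nielsenSubgroup :=
  Subgroup.subset_closure (by simp)

theorem transvectionAut_mem_nielsenSubgroup : transvectionAut ∈ nielsenSubgroup :=
  Subgroup.subset_closure (by simp)

theorem conj_of_one_eq :
    MulAut.conj (of 1) = (transvectionAut⁻¹ * invertAut) ^ 2 :=
  mulAut_freeGroup_ext (by simp [sq, mul_assoc]) (by simp [sq])

theorem conj_of_zero_eq :
    MulAut.conj (of 0) = swapAut * MulAut.conj (of 1) * swapAut :=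
  mulAut_freeGroup_ext (by simp) (by simp)

theorem conj_mem_nielsenSubgroup (w : F₂) : MulAut.conj w ∈ nielsenSubgroup := by
  have h1 : MulAut.conj (of 1) ∈ nielsenSubgroup := by
    rw [conj_of_one_eq]
    exact pow_mem
      (mul_mem (inv_mem transvectionAut_mem_nielsenSubgroup) invertAut_mem_nielsenSubgroup) 2
  have h0 : MulAut.conj (of 0) ∈ nielsenSubgroup := by
    rw [conj_of_zero_eq]
    exact mul_mem (mul_mem swapAut_mem_nielsenSubgroup h1) swapAut_mem_nielsenSubgroup
  induction w using FreeGroup.induction_on with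
  | C1 => simpa only [map_one] using one_mem _
  | of i => fin_cases i; exacts [h0, h1]
  | inv_of i ih => simpa only [map_inv] using inv_mem ih
  | mul x y hx hy => simpa only [map_mul] using mul_mem hx hy

/-- The total word length of the basis `φ a`, `φ b`. -/
def totalNorm (φ : MulAut F₂) : ℕ := (φ (of 0)).norm + (φ (of 1)).norm

/-- The basis `φ a`, `φ b` has least total length in its orbit under Nielsen moves; these act on
bases by multiplying `φ` on the right. -/
def IsShortest (φ : MulAut F₂) : Prop := ∀ ν ∈ nielsenSubgroup, totalNorm φ ≤ totalNorm (φ * ν)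

theorem exists_isShortest_mul (φ : MulAut F₂) : ∃ ν ∈ nielsenSubgroup, IsShortest (φ * ν) := by
  obtain ⟨ν, hν, hmin⟩ := exists_minimalFor_of_wellFoundedLT (· ∈ nielsenSubgroup)
    (fun ν => totalNorm (φ * ν)) ⟨1, one_mem _⟩
  refine ⟨ν, hν, fun μ hμ => ?_⟩
  rw [mul_assoc]
  exact (le_total _ _).elim id (hmin (mul_mem hν hμ))

namespace IsShortest

variable {φ : MulAut F₂}

theorem mul (h : IsShortest φ) {ν : MulAut F₂} (hν : ν ∈ nielsenSubgroup)
    (heq : totalNorm (φ * ν) = totalNorm φ) : IsShortest (φ * ν) := fun μ hμ => by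
  rw [heq, mul_assoc]
  exact h _ (mul_mem hν hμ)

theorem mul_swapAut (h : IsShortest φ) : IsShortest (φ * swapAut) :=
  h.mul swapAut_mem_nielsenSubgroup (by simp [totalNorm, add_comm])

theorem mul_invertAut (h : IsShortest φ) : IsShortest (φ * invertAut) :=
  h.mul invertAut_mem_nielsenSubgroup (by simp [totalNorm])

theorem norm_le_norm_mul (h : IsShortest φ) : (φ (of 0)).norm ≤ (φ (of 0) * φ (of 1)).norm := by
  simpa [totalNorm] using h transvectionAut transvectionAut_mem_nielsenSubgroup

theorem two_mul_gromovProduct_le (h : IsShortest φ) :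
    2 * gromovProduct (φ (of 0)) (φ (of 1)) ≤ (φ (of 0)).norm := by
  have hle : (φ (of 1)).norm ≤ ((φ (of 1))⁻¹ * φ (of 0)).norm := by
    simpa using h.mul_swapAut.mul_invertAut.norm_le_norm_mul
  have hnorm := norm_inv_mul_add_gromovProduct (φ (of 1)) (φ (of 0))
  rw [gromovProduct_comm] at hnorm
  lia

theorem two_mul_gromovProduct_inv_le (h : IsShortest φ) :
    2 * gromovProduct (φ (of 0))⁻¹ (φ (of 1)) ≤ (φ (of 0)).norm := by
  simpa using h.mul_invertAut.two_mul_gromovProduct_le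

theorem two_mul_gromovProduct_inv_inv_le (h : IsShortest φ) :
    2 * gromovProduct (φ (of 0))⁻¹ (φ (of 1))⁻¹ ≤ (φ (of 0)).norm := by
  simpa using h.mul_swapAut.mul_invertAut.mul_swapAut.mul_invertAut.two_mul_gromovProduct_le

theorem gromovProduct_add_gromovProduct_inv_lt (h : IsShortest φ) :
    gromovProduct (φ (of 0)) (φ (of 1)) + gromovProduct (φ (of 0))⁻¹ (φ (of 1)) <
      (φ (of 0)).norm := by
  have hne : φ (of 0) ≠ 1 := (map_ne_one_iff φ φ.injective).2 (of_ne_one 0)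
  have hself := two_mul_gromovProduct_inv_lt hne
  have hmin := min_gromovProduct_le (φ (of 0)) (φ (of 1)) (φ (of 0))⁻¹
  rw [gromovProduct_comm (φ (of 1))] at hmin
  have hle := h.two_mul_gromovProduct_le
  have hle_inv := h.two_mul_gromovProduct_inv_le
  lia

theorem gromovProduct_add_gromovProduct_inv_inv_lt (h : IsShortest φ) :
    gromovProduct (φ (of 0)) (φ (of 1)) + gromovProduct (φ (of 0))⁻¹ (φ (of 1))⁻¹ <
      (φ (of 0)).norm := by
  by_contra! hge
  have hle := h.two_mul_gromovProduct_le
  have hle_inv := h.two_mul_gromovProduct_inv_inv_le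
  have hle_swap : 2 * gromovProduct (φ (of 1)) (φ (of 0)) ≤ (φ (of 1)).norm := by
    simpa using h.mul_swapAut.two_mul_gromovProduct_le
  rw [gromovProduct_comm] at hle_swap
  obtain ⟨p, hp0, hp1⟩ := exists_conj_norm_lt (x := φ (of 0)) (y := φ (of 1))
    (by lia) (by lia) (by lia)
  let ν : MulAut F₂ := MulAut.conj (φ.symm p⁻¹) * (swapAut * transvectionAut⁻¹ * swapAut)
  have hν : ν ∈ nielsenSubgroup :=
    mul_mem (conj_mem_nielsenSubgroup _)
      (mul_mem (mul_mem swapAut_mem_nielsenSubgroup (inv_mem transvectionAut_mem_nielsenSubgroup))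
        swapAut_mem_nielsenSubgroup)
  have hν0 : (φ * ν) (of 0) = p⁻¹ * φ (of 0) * p := by simp [ν]
  have hν1 : (φ * ν) (of 1) = p⁻¹ * (φ (of 1) * (φ (of 0))⁻¹) * p := by simp [ν]
  have hmin := h ν hν
  rw [totalNorm, totalNorm, hν0, hν1] at hmin
  have hpos : (φ (of 0)).norm ≠ 0 :=
    norm_eq_zero.not.2 ((map_ne_one_iff φ φ.injective).2 (of_ne_one 0))
  lia

end IsShortest

/-- The basis elements `φ a`, `φ b` together with their inverses. -/
def signedBasis (φ : MulAut F₂) : Set F₂ := {x | ∃ i, x = φ (of i) ∨ x = (φ (of i))⁻¹}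

theorem closure_signedBasis (φ : MulAut F₂) : Subgroup.closure (signedBasis φ) = ⊤ := by
  have hrange : φ.toMonoidHom.range = ⊤ := MonoidHom.range_eq_top.2 φ.surjective
  rw [eq_top_iff, ← hrange, MonoidHom.range_eq_map, ← FreeGroup.closure_range_of,
    MonoidHom.map_closure]
  refine Subgroup.closure_mono ?_
  rintro _ ⟨_, ⟨i, rfl⟩, rfl⟩
  exact ⟨i, Or.inl rfl⟩

theorem eq_or_eq_inv_of_mem_signedBasis {φ : MulAut F₂} {x y z : F₂} (hx : x ∈ signedBasis φ)
    (hy : y ∈ signedBasis φ) (hz : z ∈ signedBasis φ) (hxy : x ≠ y) (hxy' : x ≠ y⁻¹)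
    (hzy : z ≠ y) (hzy' : z ≠ y⁻¹) : z = x ∨ z = x⁻¹ := by
  simp only [signedBasis, Fin.exists_fin_two, Set.mem_ofPred_eq] at hx hy hz
  grind [inv_inv]

namespace IsShortest

variable {φ : MulAut F₂}

theorem exists_eq_of_mem_signedBasis (h : IsShortest φ) {x y : F₂} (hx : x ∈ signedBasis φ)
    (hy : y ∈ signedBasis φ) (hxy : y ≠ x) (hxy' : y ≠ x⁻¹) :
    ∃ ν ∈ nielsenSubgroup, IsShortest (φ * ν) ∧
      (φ * ν) (of 0) = x ∧ (φ * ν) (of 1) = y := by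
  let P (x y : F₂) : Prop := ∃ ν ∈ nielsenSubgroup, IsShortest (φ * ν) ∧
      (φ * ν) (of 0) = x ∧ (φ * ν) (of 1) = y
  have hswap {x y : F₂} : P x y → P y x := by
    rintro ⟨ν, hν, hs, rfl, rfl⟩
    exact ⟨ν * swapAut, mul_mem hν swapAut_mem_nielsenSubgroup, hs.mul_swapAut,
      by simp, by simp⟩
  have hinv {x y : F₂} : P x y → P x⁻¹ y := by
    rintro ⟨ν, hν, hs, rfl, rfl⟩
    exact ⟨ν * invertAut, mul_mem hν invertAut_mem_nielsenSubgroup, hs.mul_invertAut,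
      by simp, by simp⟩
  have hsigns {x y x' y' : F₂} (hP : P x y) (hx' : x' = x ∨ x' = x⁻¹)
      (hy' : y' = y ∨ y' = y⁻¹) : P x' y' := by
    obtain rfl | rfl := hx' <;> obtain rfl | rfl := hy'
    exacts [hP, hswap (hinv (hswap hP)), hinv hP, hinv (hswap (hinv (hswap hP)))]
  have hone : P (φ (of 0)) (φ (of 1)) := ⟨1, one_mem _, by rwa [mul_one], rfl, rfl⟩
  simp only [signedBasis, Fin.exists_fin_two, Set.mem_ofPred_eq] at hx hy
  obtain hx | hx := hx <;> obtain hy | hy := hy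
  · grind [inv_inv]
  · exact hsigns hone hx hy
  · exact hsigns (hswap hone) hx hy
  · grind [inv_inv]

theorem nielsenReduced_signedBasis (h : IsShortest φ) : NielsenReduced (signedBasis φ) := by
  have hinv : ∀ x ∈ signedBasis φ, x⁻¹ ∈ signedBasis φ := by
    rintro x ⟨i, rfl | rfl⟩
    · exact ⟨i, Or.inr rfl⟩
    · exact ⟨i, Or.inl (inv_inv _)⟩
  have hone : 1 ∉ signedBasis φ := by
    rintro ⟨i, hi | hi⟩ <;> simp [eq_comm (a := (1 : F₂)), of_ne_one] at hi
  have hhalf : ∀ x ∈ signedBasis φ, ∀ y ∈ signedBasis φ, x ≠ y →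
      2 * gromovProduct x y ≤ x.norm := by
    intro x hx y hy hxy
    by_cases hxy' : y = x⁻¹
    · subst hxy'
      exact (two_mul_gromovProduct_inv_lt (ne_of_mem_of_not_mem hx hone)).le
    · obtain ⟨ν, -, hν, rfl, rfl⟩ := h.exists_eq_of_mem_signedBasis hx hy hxy.symm hxy'
      exact hν.two_mul_gromovProduct_le
  refine ⟨hinv, hone, hhalf, fun x hx y hy z hz hxy hzy => ?_⟩
  have hself := two_mul_gromovProduct_inv_lt (ne_of_mem_of_not_mem hy hone)
  have hyx := hhalf y hy x hx hxy.symm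
  have hyz := hhalf _ (hinv y hy) z hz hzy.symm
  rw [norm_inv_eq] at hyz
  rw [gromovProduct_comm x]
  by_cases hxy' : x = y⁻¹
  · subst hxy'
    lia
  by_cases hzy' : z = y
  · subst hzy'
    rw [gromovProduct_comm z⁻¹] at hyz ⊢
    lia
  have hzx := eq_or_eq_inv_of_mem_signedBasis hx hy hz hxy hxy' hzy' hzy
  obtain ⟨ν, -, hν, rfl, rfl⟩ := h.exists_eq_of_mem_signedBasis hy hx hxy hxy'
  obtain rfl | rfl := hzx
  · exact hν.gromovProduct_add_gromovProduct_inv_lt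
  · exact hν.gromovProduct_add_gromovProduct_inv_inv_lt

end IsShortest

theorem nielsenSubgroup_eq_top : nielsenSubgroup = ⊤ := by
  refine (Subgroup.eq_top_iff' _).2 fun φ => ?_
  obtain ⟨ν, hν, hshort⟩ := exists_isShortest_mul φ
  have hmem (i : Fin 2) : of i ∈ signedBasis (φ * ν) :=
    hshort.nielsenReduced_signedBasis.mem_of_norm_eq_one
      (closure_signedBasis (φ * ν) ▸ Subgroup.mem_top _) (norm_of i)
  obtain ⟨μ, hμ, -, h0, h1⟩ := hshort.exists_eq_of_mem_signedBasis (hmem 0) (hmem 1)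
    (by decide) (by decide)
  have hφ : φ * ν * μ = 1 := mulAut_freeGroup_ext h0 h1
  rw [mul_assoc, mul_eq_one_iff_eq_inv] at hφ
  exact hφ ▸ inv_mem (mul_mem hν hμ)

end NielsenAutomorphisms

section NormalClosure

open scoped commutatorElement

variable {G : Type*} [Group G]

theorem normal_range_conj : (MulAut.conj : G →* MulAut G).range.Normal := by
  refine ⟨?_⟩
  rintro _ ⟨g, rfl⟩ φ
  refine ⟨φ g, ?_⟩
  ext x
  simp

theorem commutatorElement_mem_of_closure_eq_top {N : Subgroup G} [N.Normal] {T : Set G} {s : G}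
    (hT : Subgroup.closure T = ⊤) (h : ∀ t ∈ T, ⁅t, s⁆ ∈ N) (g : G) : ⁅g, s⁆ ∈ N := by
  have hiff (x : G) : ⁅x, s⁆ ∈ N ↔
      x ∈ (Subgroup.centralizer {(s : G ⧸ N)}).comap (QuotientGroup.mk' N) := by
    rw [← QuotientGroup.eq_one_iff, Subgroup.mem_comap,
      Subgroup.mem_centralizer_singleton_iff]
    exact commutatorElement_eq_one_iff_mul_comm (g₁ := (x : G ⧸ N)) (g₂ := s)
  have hle : Subgroup.closure T ≤ _ := (Subgroup.closure_le _).2 fun t ht => (hiff t).1 (h t ht)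
  exact (hiff g).2 (hle (hT ▸ Subgroup.mem_top g))

theorem normal_closure_insert {N : Subgroup G} [hN : N.Normal] {s : G}
    (h : ∀ g : G, ⁅g, s⁆ ∈ N) : (Subgroup.closure (insert s (N : Set G))).Normal := by
  refine ⟨fun k hk g => ?_⟩
  suffices hle : Subgroup.closure (insert s (N : Set G)) ≤
      (Subgroup.closure (insert s (N : Set G))).comap (MulAut.conj g).toMonoidHom from hle hk
  have hs : s ∈ Subgroup.closure (insert s (N : Set G)) :=
    Subgroup.subset_closure (Set.mem_insert s _)
  have hN_le {n : G} (hn : n ∈ N) : n ∈ Subgroup.closure (insert s (N : Set G)) :=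
    Subgroup.subset_closure (Set.mem_insert_of_mem s hn)
  rw [Subgroup.closure_le]
  rintro x (rfl | hx)
  · simpa [commutatorElement_def] using mul_mem (hN_le (h g)) hs
  · exact hN_le (hN.conj_mem x hx g)

end NormalClosure

/-- Let `F₂` be the free group on two generators `a, b` and `σ` the automorphism with
`σ a = a⁻¹`, `σ b = b⁻¹`. Then the subgroup of `Aut(F₂)` generated by the inner
automorphisms together with `σ` is normal in `Aut(F₂)`. -/
theorem closure_inn_and_sigma_normal (σ : MulAut (FreeGroup (Fin 2)))
    (h0 : σ (FreeGroup.of 0) = (FreeGroup.of 0)⁻¹)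
    (h1 : σ (FreeGroup.of 1) = (FreeGroup.of 1)⁻¹) :
    (Subgroup.closure
        (insert σ
          (Set.range (MulAut.conj : FreeGroup (Fin 2) →* MulAut (FreeGroup (Fin 2)))))).Normal := by
  have hinn : (MulAut.conj : FreeGroup (Fin 2) →* MulAut (FreeGroup (Fin 2))).range.Normal :=
    normal_range_conj
  rw [← MonoidHom.coe_range]
  refine normal_closure_insert
    (commutatorElement_mem_of_closure_eq_top nielsenSubgroup_eq_top ?_)
  have hswap : swapAut * σ = σ * swapAut :=
    mulAut_freeGroup_ext (by simp [h0, h1]) (by simp [h0, h1])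
  have hinvert : invertAut * σ = σ * invertAut :=
    mulAut_freeGroup_ext (by simp [h0]) (by simp [h1])
  have htransvection :
      transvectionAut * σ = MulAut.conj (of 1)⁻¹ * σ * transvectionAut :=
    mulAut_freeGroup_ext (by simp [h0, h1, mul_assoc]) (by simp [h1])
  rintro _ (rfl | rfl | rfl)
  · rw [commutatorElement_eq_one_iff_mul_comm.2 hswap]
    exact one_mem _
  · rw [commutatorElement_eq_one_iff_mul_comm.2 hinvert]
    exact one_mem _
  · refine ⟨(of 1)⁻¹, ?_⟩
    rw [commutatorElement_def, htransvection]
    group
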